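/- Let 1 ≤ ℓ ≤ m−1, and let R = [[0, R₁₂],[R₂₁, R₂₂]] and S = [[0, S₁₂],[S₂₁, S₂₂]] be m×m complex matrices whose rows are partitioned (ℓ, m−ℓ) and columns (m−ℓ, ℓ), with R₁₂, S₁₂ ∈ ℂ^{ℓ×ℓ} and R₂₁, S₂₁ ∈ ℂ^{(m−ℓ)×(m−ℓ)} antitriangular, and such that the pencils R₁₂ − λS₁₂ and R₂₁ − λS₂₁ are regular with disjoint spectra (including infinity), i.e., for every (μ, ν) ≠ (0, 0) in ℂ², det(μR₁₂ − νS₁₂) and det(μR₂₁ − νS₂₁) do not both vanish. Then: (i) the system XR₁₂ + R₂₁Y = −R₂₂, XS₁₂ + S₂₁Y = −S₂₂ has a unique solution (X, Y) with X, Y ∈ ℂ^{(m−ℓ)×ℓ}; (ii) there exist unitary matrices Q, P ∈ ℂ^{m×m}, antitriangular matrices Ñ₂₁, M̃₂₁ ∈ ℂ^{(m−ℓ)×(m−ℓ)} and Ñ₁₂, M̃₁₂ ∈ ℂ^{ℓ×ℓ}, matrices Ñ₂₂, M̃₂₂, and nonzero constants c₁, c₂ ∈ ℂ such that QᵀRP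 = [[0, Ñ₂₁],[Ñ₁₂, Ñ₂₂]] and QᵀSP = [[0, M̃₂₁],[M̃₁₂, M̃₂₂]] (rows partitioned (m−ℓ, ℓ) and columns (ℓ, m−ℓ)), with det(Ñ₁₂ + zM̃₁₂) = c₁·det(R₁₂ + zS₁₂) and det(Ñ₂₁ + zM̃₂₁) = c₂·det(R₂₁ + zS₂₁) for all z ∈ ℂ. -/

import Mathlib

open scoped Matrix

/-- A k×k matrix is antitriangular if `N i j = 0` whenever `i + j ≤ k` (1-based),
i.e. `(i+1) + (j+1) ≤ k` for 0-based indices. -/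
def Antitriangular {k : ℕ} (N : Matrix (Fin k) (Fin k) ℂ) : Prop :=
  ∀ i j : Fin k, (i : ℕ) + 1 + ((j : ℕ) + 1) ≤ k → N i j = 0

open scoped ComplexOrder in
lemma exists_lower_conj {k : ℕ} {G : Matrix (Fin k) (Fin k) ℂ} (hG : G.PosDef) :
    ∃ T : Matrix (Fin k) (Fin k) ℂ, (∀ i j, i < j → T i j = 0) ∧ T.det ≠ 0 ∧
      T * G * Tᴴ = 1 := by
  set L := LDL.lowerInv hG with hL
  have hLu : IsUnit L := isUnit_of_invertible L
  have hD : LDL.diag hG = L * G * Lᴴ := LDL.diag_eq_lowerInv_conj hG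
  have hDpos : (LDL.diag hG).PosDef := by
    rw [hD]
    exact (Matrix.IsUnit.posDef_star_right_conjugate_iff hLu).2 hG
  have hd : ∀ i, 0 < LDL.diagEntries hG i := Matrix.posDef_diagonal_iff.1 hDpos
  set d := LDL.diagEntries hG with hdd
  set e : Fin k → ℂ := fun i => (((Real.sqrt (d i).re)⁻¹ : ℝ) : ℂ) with he
  have hre : ∀ i, 0 < (d i).re ∧ (d i) = ((d i).re : ℂ) := by
    intro i
    have := Complex.pos_iff.1 (hd i)
    exact ⟨this.1, Complex.ext (by simp) (by simp [this.2])⟩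
  have hT : (Matrix.diagonal e * L) * G * (Matrix.diagonal e * L)ᴴ = 1 := by
    rw [Matrix.conjTranspose_mul]
    have : Matrix.diagonal e * L * G * (Lᴴ * (Matrix.diagonal e)ᴴ)
        = Matrix.diagonal e * (L * G * Lᴴ) * (Matrix.diagonal e)ᴴ := by
      simp only [Matrix.mul_assoc]
    rw [this, ← hD, LDL.diag, Matrix.diagonal_conjTranspose, Matrix.diagonal_mul_diagonal,
      Matrix.diagonal_mul_diagonal, ← Matrix.diagonal_one]
    congr 1
    funext i
    obtain ⟨h1, h2⟩ := hre i
    have h3 : Real.sqrt (d i).re ≠ 0 := (Real.sqrt_pos.2 h1).ne'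
    simp only [he, Pi.star_apply, RCLike.star_def, Complex.conj_ofReal]
    rw [← hdd, h2]
    simp only [Complex.ofReal_re]
    norm_cast
    field_simp
    exact (Real.sq_sqrt h1.le).symm
  refine ⟨Matrix.diagonal e * L, ?_, ?_, hT⟩
  · intro i j hij
    rw [Matrix.diagonal_mul, hL, LDL.lowerInv_triangular hG hij, mul_zero]
  · intro h0
    have := congrArg Matrix.det hT
    rw [Matrix.det_mul, Matrix.det_mul, Matrix.det_one, h0, zero_mul, zero_mul] at this
    exact zero_ne_one this

open scoped ComplexOrder in
lemma exists_lower_fact {k : ℕ} {G : Matrix (Fin k) (Fin k) ℂ} (hG : G.PosDef) :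
    ∃ W V : Matrix (Fin k) (Fin k) ℂ, (∀ i j, i < j → W i j = 0) ∧ W.det ≠ 0 ∧
      V * G = W ∧ V * G * Vᴴ = 1 := by
  obtain ⟨T, h1, h2, h3⟩ := exists_lower_conj hG.inv
  have hu : IsUnit G.det := (Matrix.isUnit_iff_isUnit_det _).1 hG.isUnit
  have hV : T * G⁻¹ * G = T := Matrix.nonsing_inv_mul_cancel_right _ _ hu
  refine ⟨T, T * G⁻¹, h1, h2, hV, ?_⟩
  rw [hV, Matrix.conjTranspose_mul, hG.inv.isHermitian.eq, ← Matrix.mul_assoc, h3]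

lemma anti_mul {k : ℕ} {N W U : Matrix (Fin k) (Fin k) ℂ} (hN : Antitriangular N)
    (hW : ∀ i j, i < j → W i j = 0) (hU : ∀ i j, j < i → U i j = 0) :
    Antitriangular (W * N * U) := by
  intro i j hij
  rw [Matrix.mul_apply]
  refine Finset.sum_eq_zero fun b _ => ?_
  by_cases hb : j < b
  · rw [hU _ _ hb, mul_zero]
  · rw [Matrix.mul_apply, Finset.sum_eq_zero, zero_mul]
    intro a _
    by_cases ha : i < a
    · rw [hW _ _ ha, zero_mul]
    · rw [hN a b (by simp only [Fin.lt_def] at ha hb; omega), mul_zero]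

lemma anti_det_zero {k : ℕ} {N : Matrix (Fin k) (Fin k) ℂ} (hN : Antitriangular N)
    (i : Fin k) (h0 : N i (Fin.rev i) = 0) : N.det = 0 := by
  have h := Matrix.det_permute' (Fin.revPerm : Equiv.Perm (Fin k)) N
  have ht : (N.submatrix id (Fin.revPerm : Equiv.Perm (Fin k))).IsLowerTriangular := by
    intro a b hab
    have hab' : a < b := hab
    apply hN
    simp only [id, Fin.revPerm_apply, Fin.val_rev]
    simp only [Fin.lt_def] at hab'
    omega
  rw [Matrix.det_of_isLowerTriangular _ ht,
    Finset.prod_eq_zero (Finset.mem_univ i) (by simpa using h0)] at h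
  rcases Int.units_eq_one_or (Equiv.Perm.sign (Fin.revPerm : Equiv.Perm (Fin k))) with h' | h' <;>
    simpa [h'] using h.symm

lemma anti_comb {k : ℕ} {A B : Matrix (Fin k) (Fin k) ℂ} (hA : Antitriangular A)
    (hB : Antitriangular B) (μ ν : ℂ) : Antitriangular (μ • A - ν • B) := by
  intro i j hij
  simp [hA i j hij, hB i j hij]

lemma entry_eq {ℓ q : ℕ} {A : Matrix (Fin ℓ) (Fin ℓ) ℂ} {B : Matrix (Fin q) (Fin q) ℂ}
    (hA : Antitriangular A) (hB : Antitriangular B) {X Y : Matrix (Fin q) (Fin ℓ) ℂ}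
    (h : X * A + B * Y = 0) (i : Fin q) (j : Fin ℓ)
    (hX : ∀ j' < j, X i (Fin.rev j') = 0) (hY : ∀ i' < i, Y (Fin.rev i') j = 0) :
    X i (Fin.rev j) * A (Fin.rev j) j + B i (Fin.rev i) * Y (Fin.rev i) j = 0 := by
  have h1 := congrFun (congrFun h i) j
  rw [Matrix.add_apply, Matrix.mul_apply, Matrix.mul_apply,
    Finset.sum_eq_single (Fin.rev j), Finset.sum_eq_single (Fin.rev i)] at h1
  · exact h1
  · intro b _ hb
    rcases lt_or_gt_of_ne hb with hb | hb
    · rw [hB _ _ (by simp only [Fin.lt_def, Fin.val_rev] at hb; omega), zero_mul]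
    · have := hY (Fin.rev b) (by simp only [Fin.lt_def, Fin.val_rev] at hb ⊢; omega)
      rw [Fin.rev_rev] at this
      rw [this, mul_zero]
  · simp
  · intro b _ hb
    rcases lt_or_gt_of_ne hb with hb | hb
    · rw [hA _ _ (by simp only [Fin.lt_def, Fin.val_rev] at hb; omega), mul_zero]
    · have := hX (Fin.rev b) (by simp only [Fin.lt_def, Fin.val_rev] at hb ⊢; omega)
      rw [Fin.rev_rev] at this
      rw [this, zero_mul]
  · simp

lemma sylv_inj {ℓ q : ℕ}
    {R₁₂ S₁₂ : Matrix (Fin ℓ) (Fin ℓ) ℂ} {R₂₁ S₂₁ : Matrix (Fin q) (Fin q) ℂ}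
    (hR₁₂ : Antitriangular R₁₂) (hS₁₂ : Antitriangular S₁₂)
    (hR₂₁ : Antitriangular R₂₁) (hS₂₁ : Antitriangular S₂₁)
    (hdisj : ∀ μ ν : ℂ, (μ, ν) ≠ (0, 0) →
      ¬ ((μ • R₁₂ - ν • S₁₂).det = 0 ∧ (μ • R₂₁ - ν • S₂₁).det = 0))
    {X Y : Matrix (Fin q) (Fin ℓ) ℂ}
    (h1 : X * R₁₂ + R₂₁ * Y = 0) (h2 : X * S₁₂ + S₂₁ * Y = 0) : X = 0 ∧ Y = 0 := by
  have key : ∀ n : ℕ, ∀ (i : Fin q) (j : Fin ℓ), (i : ℕ) + (j : ℕ) = n →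
      X i (Fin.rev j) = 0 ∧ Y (Fin.rev i) j = 0 := by
    intro n
    induction n using Nat.strong_induction_on with
    | _ n ih =>
      intro i j hij
      have hX : ∀ j' < j, X i (Fin.rev j') = 0 := fun j' hj' =>
        (ih (i + j') (by simp only [Fin.lt_def] at hj'; omega) i j' rfl).1
      have hY : ∀ i' < i, Y (Fin.rev i') j = 0 := fun i' hi' =>
        (ih (i' + j) (by simp only [Fin.lt_def] at hi'; omega) i' j rfl).2
      have e1 := entry_eq hR₁₂ hR₂₁ h1 i j hX hY
      have e2 := entry_eq hS₁₂ hS₂₁ h2 i j hX hY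
      have no : ∀ μ ν : ℂ, (μ, ν) ≠ (0, 0) →
          μ * R₁₂ (Fin.rev j) j - ν * S₁₂ (Fin.rev j) j = 0 →
          μ * R₂₁ i (Fin.rev i) - ν * S₂₁ i (Fin.rev i) = 0 → False := by
        intro μ ν hne a1 a2
        refine hdisj μ ν hne ⟨anti_det_zero (anti_comb hR₁₂ hS₁₂ μ ν) (Fin.rev j) ?_,
          anti_det_zero (anti_comb hR₂₁ hS₂₁ μ ν) i ?_⟩
        · simpa using a1
        · simpa using a2
      generalize R₁₂ (Fin.rev j) j = r at *
      generalize S₁₂ (Fin.rev j) j = s at *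
      generalize R₂₁ i (Fin.rev i) = a at *
      generalize S₂₁ i (Fin.rev i) = b at *
      generalize X i (Fin.rev j) = x at *
      generalize Y (Fin.rev i) j = y at *
      have hD : r * b - a * s ≠ 0 := by
        intro hD
        by_cases hs : (s, r) = (0, 0)
        · obtain ⟨rfl, rfl⟩ := Prod.mk.inj hs
          by_cases hb : (b, a) = (0, 0)
          · obtain ⟨rfl, rfl⟩ := Prod.mk.inj hb
            exact no 1 0 (by simp) (by simp) (by simp)
          · exact no b a hb (by simp) (by ring)
        · exact no s r hs (by ring) (by linear_combination -hD)
      constructor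
      · refine (mul_eq_zero.1 ?_).resolve_right hD
        linear_combination b * e1 - a * e2
      · refine (mul_eq_zero.1 ?_).resolve_right hD
        linear_combination r * e2 - s * e1
  constructor
  · ext i j
    simpa using (key _ i (Fin.rev j) rfl).1
  · ext i j
    simpa using (key _ (Fin.rev i) j rfl).2

lemma sylv_exists_unique {ℓ q : ℕ}
    {R₁₂ S₁₂ : Matrix (Fin ℓ) (Fin ℓ) ℂ} {R₂₁ S₂₁ : Matrix (Fin q) (Fin q) ℂ}
    (R₂₂ S₂₂ : Matrix (Fin q) (Fin ℓ) ℂ)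
    (hR₁₂ : Antitriangular R₁₂) (hS₁₂ : Antitriangular S₁₂)
    (hR₂₁ : Antitriangular R₂₁) (hS₂₁ : Antitriangular S₂₁)
    (hdisj : ∀ μ ν : ℂ, (μ, ν) ≠ (0, 0) →
      ¬ ((μ • R₁₂ - ν • S₁₂).det = 0 ∧ (μ • R₂₁ - ν • S₂₁).det = 0)) :
    ∃! p : Matrix (Fin q) (Fin ℓ) ℂ × Matrix (Fin q) (Fin ℓ) ℂ,
        p.1 * R₁₂ + R₂₁ * p.2 = -R₂₂ ∧ p.1 * S₁₂ + S₂₁ * p.2 = -S₂₂ := by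
  let f : (Matrix (Fin q) (Fin ℓ) ℂ × Matrix (Fin q) (Fin ℓ) ℂ) →ₗ[ℂ]
      (Matrix (Fin q) (Fin ℓ) ℂ × Matrix (Fin q) (Fin ℓ) ℂ) :=
    { toFun := fun p => (p.1 * R₁₂ + R₂₁ * p.2, p.1 * S₁₂ + S₂₁ * p.2)
      map_add' := by
        intro p p'
        ext : 1 <;> simp only [Prod.fst_add, Prod.snd_add, Matrix.add_mul, Matrix.mul_add] <;> abel
      map_smul' := by
        intro c p
        ext : 1 <;> simp [smul_add] }
  have hf : Function.Injective f := by
    rw [← LinearMap.ker_eq_bot, LinearMap.ker_eq_bot']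
    intro p hp
    obtain ⟨h1, h2⟩ := Prod.mk.inj (show ((p.1 * R₁₂ + R₂₁ * p.2, p.1 * S₁₂ + S₂₁ * p.2) :
      Matrix (Fin q) (Fin ℓ) ℂ × Matrix (Fin q) (Fin ℓ) ℂ) = (0, 0) from hp)
    obtain ⟨h3, h4⟩ := sylv_inj hR₁₂ hS₁₂ hR₂₁ hS₂₁ hdisj h1 h2
    exact Prod.ext h3 h4
  have hbij : Function.Bijective f := ⟨hf, LinearMap.injective_iff_surjective.1 hf⟩
  obtain ⟨p, hp, hu⟩ := hbij.existsUnique (-R₂₂, -S₂₂)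
  refine ⟨p, Prod.mk.inj hp, fun p' hp' => hu p' ?_⟩
  exact Prod.ext hp'.1 hp'.2

open scoped ComplexOrder in
lemma posDef_one_add {m n : ℕ} (X : Matrix (Fin m) (Fin n) ℂ) : (1 + X * Xᴴ).PosDef :=
  Matrix.PosDef.one.add_posSemidef (Matrix.posSemidef_self_mul_conjTranspose X)

lemma isHerm_one_add {m n : ℕ} (X : Matrix (Fin m) (Fin n) ℂ) : (1 + X * Xᴴ).IsHermitian := by
  open scoped ComplexOrder in
  exact (posDef_one_add X).isHermitian

lemma block_swap {ℓ q : ℕ}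
    (R₁₂ : Matrix (Fin ℓ) (Fin ℓ) ℂ) (R₂₁ : Matrix (Fin q) (Fin q) ℂ)
    (R₂₂ X Y : Matrix (Fin q) (Fin ℓ) ℂ) (h : X * R₁₂ + R₂₁ * Y = -R₂₂)
    (T K C : Matrix (Fin q) (Fin q) ℂ) (W V U : Matrix (Fin ℓ) (Fin ℓ) ℂ)
    (hV : V * (1 + Xᴴ * X) = W) (hC : (1 + Y * Yᴴ) * C = K) :
    ∃ N₂₂ : Matrix (Fin ℓ) (Fin q) ℂ,
      Matrix.fromBlocks (T * X) T V (-(V * Xᴴ)) * Matrix.fromBlocks 0 R₁₂ R₂₁ R₂₂ *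
        Matrix.fromBlocks (Y * U) C U (-(Yᴴ * C)) =
      Matrix.fromBlocks 0 (T * R₂₁ * K) (W * R₁₂ * U) N₂₂ := by
  have h' : R₂₂ = -(X * R₁₂) - R₂₁ * Y := by rw [← neg_eq_iff_eq_neg.2 h]; abel
  subst h' hV hC
  rw [Matrix.fromBlocks_multiply, Matrix.fromBlocks_multiply]
  simp only [Matrix.fromBlocks_inj]
  refine ⟨_, ?_, ?_, ?_, rfl⟩ <;>
  · simp only [Matrix.mul_add, Matrix.add_mul, Matrix.mul_sub, Matrix.sub_mul, Matrix.mul_neg,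
      Matrix.neg_mul, Matrix.mul_zero, Matrix.zero_mul, Matrix.mul_one, Matrix.one_mul, Matrix.mul_assoc]
    abel

/-- swapping two pairs of blocks.  Here the size `m` of the paper is
`ℓ + q` with `1 ≤ ℓ` and `1 ≤ q = m − ℓ`.  `R = [[0, R₁₂], [R₂₁, R₂₂]]` and
`S = [[0, S₁₂], [S₂₁, S₂₂]]` have rows partitioned `(ℓ, q)` and columns `(q, ℓ)`,
with `R₁₂, S₁₂ ∈ ℂ^{ℓ×ℓ}` and `R₂₁, S₂₁ ∈ ℂ^{q×q}` antitriangular, and the pencils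
`R₁₂ − λ S₁₂` and `R₂₁ − λ S₂₁` regular with disjoint spectra (homogeneous form).
Then (i) the system `X R₁₂ + R₂₁ Y = −R₂₂`, `X S₁₂ + S₂₁ Y = −S₂₂` has a unique
solution, and (ii) there exist unitary `Q`, `P` such that `Qᵀ R P` and `Qᵀ S P` are
antitriangular-blocked with the spectra of the antidiagonal block pencils swapped. -/
theorem swap_block_pairs
    (ℓ q : ℕ) (hℓ : 1 ≤ ℓ) (hq : 1 ≤ q)
    (R₁₂ S₁₂ : Matrix (Fin ℓ) (Fin ℓ) ℂ) (R₂₁ S₂₁ : Matrix (Fin q) (Fin q) ℂ)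
    (R₂₂ S₂₂ : Matrix (Fin q) (Fin ℓ) ℂ)
    (hR₁₂ : Antitriangular R₁₂) (hS₁₂ : Antitriangular S₁₂)
    (hR₂₁ : Antitriangular R₂₁) (hS₂₁ : Antitriangular S₂₁)
    (hdisj : ∀ μ ν : ℂ, (μ, ν) ≠ (0, 0) →
      ¬ ((μ • R₁₂ - ν • S₁₂).det = 0 ∧ (μ • R₂₁ - ν • S₂₁).det = 0)) :
    (∃! p : Matrix (Fin q) (Fin ℓ) ℂ × Matrix (Fin q) (Fin ℓ) ℂ,
        p.1 * R₁₂ + R₂₁ * p.2 = -R₂₂ ∧ p.1 * S₁₂ + S₂₁ * p.2 = -S₂₂) ∧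
    ∃ (Q : Matrix (Fin ℓ ⊕ Fin q) (Fin q ⊕ Fin ℓ) ℂ)
      (P : Matrix (Fin q ⊕ Fin ℓ) (Fin ℓ ⊕ Fin q) ℂ)
      (N₂₁ M₂₁ : Matrix (Fin q) (Fin q) ℂ) (N₁₂ M₁₂ : Matrix (Fin ℓ) (Fin ℓ) ℂ)
      (N₂₂ M₂₂ : Matrix (Fin ℓ) (Fin q) ℂ) (c₁ c₂ : ℂ),
        Qᴴ * Q = 1 ∧ Pᴴ * P = 1 ∧
        Antitriangular N₂₁ ∧ Antitriangular M₂₁ ∧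
        Antitriangular N₁₂ ∧ Antitriangular M₁₂ ∧ c₁ ≠ 0 ∧ c₂ ≠ 0 ∧
        Qᵀ * Matrix.fromBlocks 0 R₁₂ R₂₁ R₂₂ * P = Matrix.fromBlocks 0 N₂₁ N₁₂ N₂₂ ∧
        Qᵀ * Matrix.fromBlocks 0 S₁₂ S₂₁ S₂₂ * P = Matrix.fromBlocks 0 M₂₁ M₁₂ M₂₂ ∧
        (∀ z : ℂ, (N₁₂ + z • M₁₂).det = c₁ * (R₁₂ + z • S₁₂).det) ∧
        (∀ z : ℂ, (N₂₁ + z • M₂₁).det = c₂ * (R₂₁ + z • S₂₁).det) := by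
  have hex := sylv_exists_unique R₂₂ S₂₂ hR₁₂ hS₁₂ hR₂₁ hS₂₁ hdisj
  refine ⟨hex, ?_⟩
  obtain ⟨⟨X, Y⟩, ⟨h1, h2⟩, -⟩ := hex
  simp only at h1 h2
  obtain ⟨T, hT, hTd, hT1⟩ := exists_lower_conj (posDef_one_add X)
  obtain ⟨U, hU, hUd, hU1⟩ := exists_lower_conj (posDef_one_add Yᴴ)
  obtain ⟨W, V, hW, hWd, hV, hV1⟩ := exists_lower_fact (posDef_one_add Xᴴ)
  obtain ⟨K, C, hK, hKd, hC, hC1⟩ := exists_lower_fact (posDef_one_add Y)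
  rw [Matrix.conjTranspose_conjTranspose] at hU1 hV hV1
  have hU' : ∀ i j, j < i → Uᴴ i j = 0 := fun i j hij => by
    rw [Matrix.conjTranspose_apply, hU _ _ hij, star_zero]
  have hK' : ∀ i j, j < i → Kᴴ i j = 0 := fun i j hij => by
    rw [Matrix.conjTranspose_apply, hK _ _ hij, star_zero]
  have hC' : (1 + Y * Yᴴ) * Cᴴ = Kᴴ := by
    rw [← hC, Matrix.conjTranspose_mul, (isHerm_one_add Y).eq]
  obtain ⟨N₂₂, hN⟩ := block_swap R₁₂ R₂₁ R₂₂ X Y h1 T Kᴴ Cᴴ W V Uᴴ hV hC'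
  obtain ⟨M₂₂, hM⟩ := block_swap S₁₂ S₂₁ S₂₂ X Y h2 T Kᴴ Cᴴ W V Uᴴ hV hC'
  refine ⟨(Matrix.fromBlocks (T * X) T V (-(V * Xᴴ)))ᵀ,
    Matrix.fromBlocks (Y * Uᴴ) Cᴴ Uᴴ (-(Yᴴ * Cᴴ)),
    T * R₂₁ * Kᴴ, T * S₂₁ * Kᴴ, W * R₁₂ * Uᴴ, W * S₁₂ * Uᴴ, N₂₂, M₂₂,
    W.det * Uᴴ.det, T.det * Kᴴ.det, ?_, ?_, anti_mul hR₂₁ hT hK', anti_mul hS₂₁ hT hK',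
    anti_mul hR₁₂ hW hU', anti_mul hS₁₂ hW hU', ?_, ?_, ?_, ?_, ?_, ?_⟩
  · have hQ : Matrix.fromBlocks (T * X) T V (-(V * Xᴴ)) *
        (Matrix.fromBlocks (T * X) T V (-(V * Xᴴ)))ᴴ = 1 := by
      rw [Matrix.fromBlocks_conjTranspose, Matrix.fromBlocks_multiply, ← Matrix.fromBlocks_one,
        Matrix.fromBlocks_inj]
      refine ⟨?_, ?_, ?_, ?_⟩
      · rw [← hT1]
        simp only [Matrix.conjTranspose_mul, Matrix.mul_add, Matrix.add_mul, Matrix.mul_assoc,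
          Matrix.mul_one, Matrix.one_mul]
        abel
      · simp [Matrix.mul_assoc]
      · simp [Matrix.mul_assoc]
      · rw [← hV1]
        simp only [Matrix.conjTranspose_mul, Matrix.mul_add, Matrix.add_mul, Matrix.mul_assoc,
          Matrix.mul_one, Matrix.one_mul, Matrix.conjTranspose_neg, neg_mul_neg,
          Matrix.neg_mul, Matrix.mul_neg, neg_neg, Matrix.conjTranspose_conjTranspose]
    have := congrArg Matrix.transpose hQ
    rw [Matrix.transpose_mul, Matrix.transpose_one] at this
    exact this
  · rw [Matrix.fromBlocks_conjTranspose, Matrix.fromBlocks_multiply, ← Matrix.fromBlocks_one,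
        Matrix.fromBlocks_inj]
    refine ⟨?_, ?_, ?_, ?_⟩
    · rw [← hU1]
      simp only [Matrix.conjTranspose_mul, Matrix.mul_add, Matrix.add_mul, Matrix.mul_assoc,
          Matrix.mul_one, Matrix.one_mul, Matrix.conjTranspose_conjTranspose]
      abel
    · simp [Matrix.mul_assoc]
    · simp [Matrix.mul_assoc]
    · rw [← hC1]
      simp only [Matrix.conjTranspose_mul, Matrix.mul_add, Matrix.add_mul, Matrix.mul_assoc,
          Matrix.mul_one, Matrix.one_mul, Matrix.conjTranspose_neg,
          Matrix.neg_mul, Matrix.mul_neg, neg_neg, Matrix.conjTranspose_conjTranspose]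
  · refine mul_ne_zero hWd ?_
    rw [Matrix.det_conjTranspose]
    exact star_ne_zero.2 hUd
  · refine mul_ne_zero hTd ?_
    rw [Matrix.det_conjTranspose]
    exact star_ne_zero.2 hKd
  · rw [Matrix.transpose_transpose]
    exact hN
  · rw [Matrix.transpose_transpose]
    exact hM
  · intro z
    have : W * R₁₂ * Uᴴ + z • (W * S₁₂ * Uᴴ) = W * (R₁₂ + z • S₁₂) * Uᴴ := by
      simp [Matrix.mul_add, Matrix.add_mul]
    rw [this, Matrix.det_mul, Matrix.det_mul]
    ring
  · intro z
    have : T * R₂₁ * Kᴴ + z • (T * S₂₁ * Kᴴ) = T * (R₂₁ + z • S₂₁) * Kᴴ := by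
      simp [Matrix.mul_add, Matrix.add_mul]
    rw [this, Matrix.det_mul, Matrix.det_mul]
    ring
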